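/- Let n ≥ 1, let τ > λ > 0 be real numbers, set σ = τ − λ, and let Δ = {x ∈ ℝⁿ : xᵢ ≥ 0 for all i, x₁ + ⋯ + xₙ ≤ τ, and xₙ ≤ λ}. For every b = (b₁, …, bₙ) ∈ ℝⁿ satisfying n·bₙ = b₁ + ⋯ + b_{n−1} (a mass linear pair), the inner product of the mass center of Δ with b equals ⟨Cm(Δ), b⟩ = bₙ · (τⁿ⁺¹ − σⁿ⁺¹ − λσⁿ)/(τⁿ − σⁿ). (This is equation (langerm) in the paper's Example on the one-point blow-up of ℂPⁿ: if this quantity is not an integer, the loop φ_b is not contractible in the Hamiltonian group.) -/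

import Mathlib

open MeasureTheory

/-! The affine involution that exchanges a coordinate `xᵢ` with the slack `τ - ∑ⱼ xⱼ` of the
constraint `∑ⱼ xⱼ ≤ τ` preserves Lebesgue measure, and for `i ≠ n` it maps `Δ` to itself. Hence the
first `n - 1` coordinates of the mass center `c` all equal its slack `s`, so `n s + cₙ = τ`. Pairing
with `b` gives `s ∑_{i ≠ n} bᵢ + cₙ bₙ = (n s + cₙ) bₙ = τ bₙ`, and the quotient in the theorem is
`τ`. -/

section MeasurePreserving

variable {E : Type*} [NormedAddCommGroup E] [NormedSpace ℝ E] [FiniteDimensional ℝ E]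
  [MeasurableSpace E] [BorelSpace E]

theorem measurePreserving_linearMap_of_abs_det_eq_one (μ : Measure E) [μ.IsAddHaarMeasure]
    {f : E →ₗ[ℝ] E} (hf : |LinearMap.det f| = 1) : MeasurePreserving f μ μ where
  measurable := f.continuous_of_finiteDimensional.measurable
  map_eq := by
    have hdet : LinearMap.det f ≠ 0 := abs_ne_zero.mp (hf ▸ one_ne_zero)
    rw [Measure.map_linearMap_addHaar_eq_smul_addHaar μ hdet, abs_inv, hf, inv_one,
      ENNReal.ofReal_one, one_smul]

end MeasurePreserving

variable {ι : Type*} [Fintype ι]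

section SlackSwap

/-- The linear form that defines, along the `i`-th basis vector, the reflection which is the linear
part of `slackSwap τ i`. The sign is the one expected by `LinearMap.transvection`. -/
@[simps]
def slackSwapDual (i : ι) : Module.Dual ℝ (ι → ℝ) where
  toFun x := -(x i + ∑ j, x j)
  map_add' x y := by
    simp only [Pi.add_apply, Finset.sum_add_distrib]
    ring
  map_smul' a x := by
    simp only [Pi.smul_apply, smul_eq_mul, ← Finset.mul_sum, RingHom.id_apply]
    ring

variable [DecidableEq ι]

/-- The affine map exchanging the coordinate `x i` with the slack `τ - ∑ j, x j`. For `i` other than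
the truncated coordinate it is a symmetry of the truncated simplex. -/
def slackSwap (τ : ℝ) (i : ι) (x : ι → ℝ) : ι → ℝ :=
  Function.update x i (τ - ∑ j, x j)

@[simp]
theorem slackSwap_apply_self (τ : ℝ) (i : ι) (x : ι → ℝ) : slackSwap τ i x i = τ - ∑ j, x j :=
  Function.update_self ..

theorem slackSwap_apply_of_ne {i k : ι} (hki : k ≠ i) (τ : ℝ) (x : ι → ℝ) :
    slackSwap τ i x k = x k :=
  Function.update_of_ne hki ..

theorem sum_slackSwap (τ : ℝ) (i : ι) (x : ι → ℝ) : ∑ j, slackSwap τ i x j = τ - x i := by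
  have hx := Finset.sum_erase_add Finset.univ x (Finset.mem_univ i)
  rw [slackSwap, Finset.sum_update_of_mem (Finset.mem_univ i), ← Finset.erase_eq]
  linarith

theorem slackSwap_involutive (τ : ℝ) (i : ι) : Function.Involutive (slackSwap τ i) := by
  intro x
  rw [slackSwap, sum_slackSwap, sub_sub_cancel, slackSwap, Function.update_idem,
    Function.update_eq_self]

theorem slackSwap_eq_single_add_transvection (τ : ℝ) (i : ι) (x : ι → ℝ) :
    slackSwap τ i x =
      Pi.single i τ + LinearMap.transvection (slackSwapDual i) (Pi.single i 1) x := by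
  ext k
  obtain rfl | hki := eq_or_ne k i
  · simp only [slackSwap_apply_self, LinearMap.transvection.apply, slackSwapDual_apply,
      Pi.add_apply, Pi.smul_apply, Pi.single_eq_same, smul_eq_mul]
    ring
  · simp [LinearMap.transvection.apply, slackSwap_apply_of_ne hki, hki]

theorem det_transvection_slackSwapDual (i : ι) :
    LinearMap.det (LinearMap.transvection (slackSwapDual i) (Pi.single i 1)) = -1 := by
  norm_num [LinearMap.transvection.det, slackSwapDual_apply]

theorem measurePreserving_slackSwap (τ : ℝ) (i : ι) :
    MeasurePreserving (slackSwap τ i) volume volume := by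
  have hdet : |LinearMap.det (LinearMap.transvection (slackSwapDual i) (Pi.single i 1))| = 1 := by
    rw [det_transvection_slackSwapDual, abs_neg, abs_one]
  rw [funext (slackSwap_eq_single_add_transvection τ i)]
  exact (measurePreserving_add_left volume (Pi.single i τ)).comp
    (measurePreserving_linearMap_of_abs_det_eq_one volume hdet)

theorem measurableEmbedding_slackSwap (τ : ℝ) (i : ι) : MeasurableEmbedding (slackSwap τ i) :=
  (MeasurableEquiv.ofInvolutive _ (slackSwap_involutive τ i)
    (measurePreserving_slackSwap τ i).measurable).measurableEmbedding

end SlackSwap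

section MassCenter

/-- The mass center `Cm(Δ)` of a set `Δ` with respect to Lebesgue measure. A coordinate has the junk
value `0` if it is not integrable on `Δ`, or if `Δ` has measure `0` or `∞`. -/
noncomputable def massCenter (Δ : Set (ι → ℝ)) : ι → ℝ :=
  fun i ↦ (∫ x in Δ, x i) / volume.real Δ

theorem massCenter_apply_eq_slack [DecidableEq ι] {Δ : Set (ι → ℝ)} {τ : ℝ} {i : ι}
    (hswap : Set.MapsTo (slackSwap τ i) Δ Δ) (hint : ∀ j, IntegrableOn (fun x ↦ x j) Δ)
    (hvol : volume.real Δ ≠ 0) :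
    massCenter Δ i = τ - ∑ j, massCenter Δ j := by
  have hpre : slackSwap τ i ⁻¹' Δ = Δ :=
    Set.Subset.antisymm (fun x hx ↦ slackSwap_involutive τ i x ▸ hswap hx) hswap
  have hconst : IntegrableOn (fun _ ↦ τ) Δ :=
    integrableOn_const (fun h ↦ hvol (by simp [Measure.real, h]))
  have hintegral : ∫ x in Δ, x i = τ * volume.real Δ - ∑ j, ∫ x in Δ, x j := calc
    ∫ x in Δ, x i = ∫ x in slackSwap τ i ⁻¹' Δ, slackSwap τ i x i :=
      ((measurePreserving_slackSwap τ i).setIntegral_preimage_emb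
        (measurableEmbedding_slackSwap τ i) (fun x ↦ x i) Δ).symm
    _ = ∫ x in Δ, (τ - ∑ j, x j) := by simp only [hpre, slackSwap_apply_self]
    _ = τ * volume.real Δ - ∑ j, ∫ x in Δ, x j := by
      rw [integral_sub hconst (integrable_finsetSum _ fun j _ ↦ hint j),
        integral_finsetSum _ fun j _ ↦ hint j, setIntegral_const, smul_eq_mul, mul_comm]
  simp only [massCenter]
  rw [hintegral, sub_div, mul_div_cancel_right₀ τ hvol, Finset.sum_div]

end MassCenter

theorem dotProduct_eq_mul_of_forall_ne_eq_slack {R : Type*} [CommRing R] [DecidableEq ι] (l : ι)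
    {τ : R} {b c : ι → R} (hc : ∀ i ≠ l, c i = τ - ∑ j, c j)
    (hb : Fintype.card ι * b l = ∑ i with i ≠ l, b i) :
    c ⬝ᵥ b = b l * τ := by
  set s := τ - ∑ j, c j with hs
  have hc_sum : ∑ i, c i = (Fintype.card ι : R) * s + (c l - s) := by
    have h : ∀ i, c i = s + if i = l then c l - s else 0 := fun i ↦ by
      split_ifs with hil
      · rw [hil, add_sub_cancel]
      · rw [hc i hil, add_zero]
    rw [Finset.sum_congr rfl fun i _ ↦ h i]
    simp [Finset.sum_add_distrib]
  calc c ⬝ᵥ b = c l * b l + ∑ i with i ≠ l, c i * b i := by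
        rw [dotProduct, Finset.filter_ne',
          Finset.add_sum_erase _ (fun i ↦ c i * b i) (Finset.mem_univ l)]
    _ = c l * b l + s * ∑ i with i ≠ l, b i := by
        rw [Finset.mul_sum]
        exact congrArg _ (Finset.sum_congr rfl fun i hi ↦ by rw [hc i (Finset.mem_filter.mp hi).2])
    _ = b l * τ := by
        rw [← hb]
        linear_combination b l * hs - b l * hc_sum

section TruncatedSimplex

/-- The simplex `{x | 0 ≤ x, ∑ i, x i ≤ τ}` truncated by `x l ≤ lam`. For `0 < lam < τ` it is the
moment polytope of the one-point blow-up of complex projective space. -/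
def truncatedSimplex (l : ι) (τ lam : ℝ) : Set (ι → ℝ) :=
  {x | (∀ i, 0 ≤ x i) ∧ ∑ i, x i ≤ τ ∧ x l ≤ lam}

theorem isCompact_truncatedSimplex (l : ι) (τ lam : ℝ) : IsCompact (truncatedSimplex l τ lam) := by
  have hclosed : IsClosed (truncatedSimplex l τ lam) := by
    simp only [truncatedSimplex, Set.ofPred_and, Set.ofPred_forall]
    exact (isClosed_iInter fun i ↦ isClosed_le (by fun_prop) (by fun_prop)).inter
      ((isClosed_le (by fun_prop) (by fun_prop)).inter (isClosed_le (by fun_prop) (by fun_prop)))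
  refine (isCompact_Icc (a := 0) (b := fun _ ↦ τ)).of_isClosed_subset hclosed ?_
  rintro x ⟨hx_nonneg, hx_sum, -⟩
  exact ⟨hx_nonneg, fun k ↦
    (Finset.single_le_sum (fun i _ ↦ hx_nonneg i) (Finset.mem_univ k)).trans hx_sum⟩

theorem volume_real_truncatedSimplex_pos (l : ι) {τ lam : ℝ} (hτ : 0 < τ) (hlam : 0 < lam) :
    0 < volume.real (truncatedSimplex l τ lam) := by
  have : Nonempty ι := ⟨l⟩
  obtain ⟨ε, hε, hε_lt⟩ := exists_pos_mul_lt (lt_min hτ hlam) (Fintype.card ι)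
  have hε_le : ε ≤ Fintype.card ι * ε :=
    le_mul_of_one_le_left hε.le (mod_cast Fintype.card_pos (α := ι))
  have hcube : Set.univ.pi (fun _ : ι ↦ Set.Ioo 0 ε) ⊆ truncatedSimplex l τ lam := by
    intro x hx
    have hx_lt : ∀ i, x i < ε := fun i ↦ (hx i trivial).2
    refine ⟨fun i ↦ (hx i trivial).1.le, ?_, ?_⟩
    · calc ∑ i, x i ≤ ∑ _i : ι, ε := Finset.sum_le_sum fun i _ ↦ (hx_lt i).le
        _ = Fintype.card ι * ε := by simp
        _ ≤ τ := hε_lt.le.trans (min_le_left _ _)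
    · exact (hx_lt l).le.trans (hε_le.trans (hε_lt.le.trans (min_le_right _ _)))
  have hcube_pos : 0 < volume (Set.univ.pi fun _ : ι ↦ Set.Ioo 0 ε) :=
    (isOpen_set_pi Set.finite_univ fun _ _ ↦ isOpen_Ioo).measure_pos volume
      (Set.univ_pi_nonempty_iff.mpr fun _ ↦ Set.nonempty_Ioo.mpr hε)
  exact ENNReal.toReal_pos (hcube_pos.trans_le (measure_mono hcube)).ne'
    (isCompact_truncatedSimplex l τ lam).measure_lt_top.ne

theorem mapsTo_slackSwap_truncatedSimplex [DecidableEq ι] {i l : ι} (hil : i ≠ l) (τ lam : ℝ) :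
    Set.MapsTo (slackSwap τ i) (truncatedSimplex l τ lam) (truncatedSimplex l τ lam) := by
  rintro x ⟨hx_nonneg, hx_sum, hx_le⟩
  refine ⟨fun k ↦ ?_, ?_, ?_⟩
  · obtain rfl | hki := eq_or_ne k i
    · simpa using hx_sum
    · simpa [slackSwap_apply_of_ne hki] using hx_nonneg k
  · simpa [sum_slackSwap] using hx_nonneg i
  · simpa [slackSwap_apply_of_ne hil.symm] using hx_le

end TruncatedSimplex

theorem stmt13_general [DecidableEq ι] (l : ι) {τ lam : ℝ} (hτ : 0 < τ) (hlam : 0 < lam)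
    {b : ι → ℝ} (hb : Fintype.card ι * b l = ∑ i with i ≠ l, b i) :
    massCenter (truncatedSimplex l τ lam) ⬝ᵥ b = b l * τ := by
  have hint : ∀ j, IntegrableOn (fun x ↦ x j) (truncatedSimplex l τ lam) := fun j ↦
    (continuous_apply j).continuousOn.integrableOn_compact (isCompact_truncatedSimplex l τ lam)
  exact dotProduct_eq_mul_of_forall_ne_eq_slack l (fun i hil ↦
    massCenter_apply_eq_slack (mapsTo_slackSwap_truncatedSimplex hil τ lam) hint
      (volume_real_truncatedSimplex_pos l hτ hlam).ne') hb

theorem pow_succ_sub_pow_succ_sub_mul_div {K : Type*} [Field K] {x y : K} {n : ℕ}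
    (h : x ^ n ≠ y ^ n) :
    (x ^ (n + 1) - y ^ (n + 1) - (x - y) * y ^ n) / (x ^ n - y ^ n) = x := by
  rw [div_eq_iff (sub_ne_zero.mpr h)]
  ring

/-- For the truncated simplex `Δ` (moment polytope of the one-point blow-up of `ℂPⁿ`) and
a mass linear vector `b` with `n·bₙ = b₁ + ⋯ + b_{n-1}`, the inner product of the mass
center of `Δ` with `b` equals `bₙ (τⁿ⁺¹ - σⁿ⁺¹ - λσⁿ)/(τⁿ - σⁿ)`, where `σ = τ - λ`. -/
theorem stmt13 {n : ℕ} (hn : 1 ≤ n) (τ lam σ : ℝ) (hlam : 0 < lam) (hτ : lam < τ)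
    (hσ : σ = τ - lam)
    (Δ : Set (Fin n → ℝ))
    (hΔ : Δ = {x : Fin n → ℝ | (∀ i, 0 ≤ x i) ∧ ∑ i, x i ≤ τ ∧
      x ⟨n - 1, by omega⟩ ≤ lam})
    (b : Fin n → ℝ)
    (hb : (n : ℝ) * b ⟨n - 1, by omega⟩
      = ∑ i ∈ Finset.univ.filter (fun i : Fin n => (i : ℕ) ≠ n - 1), b i) :
    ∑ i : Fin n, ((∫ x in Δ, x i) / (volume Δ).toReal) * b i
      = b ⟨n - 1, by omega⟩
        * (τ ^ (n + 1) - σ ^ (n + 1) - lam * σ ^ n) / (τ ^ n - σ ^ n) := by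
  have hpow : τ ^ n ≠ σ ^ n :=
    (pow_lt_pow_left₀ (by linarith) (by linarith) (by omega)).ne'
  rw [mul_div_assoc, show lam = τ - σ by linarith, pow_succ_sub_pow_succ_sub_mul_div hpow, hΔ]
  exact stmt13_general (⟨n - 1, by omega⟩ : Fin n) (hlam.trans hτ) hlam
    (by simpa [Fin.ext_iff] using hb)
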